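/- arXiv:2103.05415 — 2 statements merged into one kernel-verified Lean document; each statement's English description precedes it below -/
import Mathlib

section
/- Let k ∈ ℕ, let G be a subgroup of the symmetric group on [k], and let M ⊆ ℕ^k be a set such that: (i) for all β ∈ M and g ∈ G, the vector obtained from β by permuting coordinates according to g lies in M; and (ii) for all β ∈ M and j ∈ [k] with β_j > 0, the vector β − e_j lies in M, where e_j is the j-th standard basis vector. For n ∈ ℕ let M_n := {β ∈ M : Σ_{j∈[k]} β_j = n}, with G acting on M_n by permuting coordinates. Then the number of G-orbits on M_n is a quasipolynomial in n for all n ≫ 0. -/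
/-- A function `f : ℤ → ℚ` is a quasipolynomial if there are an integer `N ≥ 1` and
polynomials `p i ∈ ℚ[t]` such that `f n = p (n mod N) (n)` for all `n`. -/
def IsQuasiPolynomial (f : ℤ → ℚ) : Prop :=
  ∃ N : ℕ, 0 < N ∧ ∃ p : ZMod N → Polynomial ℚ,
    ∀ n : ℤ, f n = (p (n : ZMod N)).eval (n : ℚ)

/-- A quantity `a : ℕ → ℕ` is a quasipolynomial in `n` for all `n ≫ 0`. -/
def QuasiPolynomialCount (a : ℕ → ℕ) : Prop :=
  ∃ f : ℤ → ℚ, IsQuasiPolynomial f ∧ ∃ n₀ : ℕ, ∀ n : ℕ, n₀ ≤ n → (a n : ℚ) = f n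

open Finset

def RatGF (a : PowerSeries ℚ) : Prop :=
  ∃ N : ℕ, 0 < N ∧ ∃ m : ℕ, ∃ p : Polynomial ℚ,
    (1 - (PowerSeries.X : PowerSeries ℚ) ^ N) ^ m * a = (p : PowerSeries ℚ)

lemma RatGF.polyMul {a : PowerSeries ℚ} (h : RatGF a) (q : Polynomial ℚ) :
    RatGF ((q : PowerSeries ℚ) * a) := by
  obtain ⟨N, hN, m, p, hp⟩ := h
  refine ⟨N, hN, m, q * p, ?_⟩
  rw [Polynomial.coe_mul, ← hp]; ring

lemma one_sub_pow_factor (N K m : ℕ) : ∃ q : Polynomial ℚ,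
    (1 - (PowerSeries.X : PowerSeries ℚ) ^ (N * K)) ^ m
      = (q : PowerSeries ℚ) * (1 - PowerSeries.X ^ N) ^ m := by
  have h : (1 - (Polynomial.X : Polynomial ℚ) ^ N) ^ m ∣ (1 - Polynomial.X ^ (N * K)) ^ m := by
    apply pow_dvd_pow_of_dvd
    have := sub_dvd_pow_sub_pow (1 : Polynomial ℚ) (Polynomial.X ^ N) K
    rwa [one_pow, ← pow_mul] at this
  obtain ⟨q, hq⟩ := h
  refine ⟨q, ?_⟩
  have := congrArg (fun p : Polynomial ℚ => (p : PowerSeries ℚ)) hq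
  simp at this
  rw [this]; ring

lemma RatGF.add {a b : PowerSeries ℚ} (ha : RatGF a) (hb : RatGF b) : RatGF (a + b) := by
  obtain ⟨N, hN, m, p, hp⟩ := ha
  obtain ⟨N', hN', m', p', hp'⟩ := hb
  obtain ⟨q, hq⟩ := one_sub_pow_factor N N' m
  obtain ⟨q', hq'⟩ := one_sub_pow_factor N' N m'
  refine ⟨N * N', Nat.mul_pos hN hN', m + m',
    (1 - Polynomial.X ^ (N * N')) ^ m' * q * p + (1 - Polynomial.X ^ (N * N')) ^ m * q' * p', ?_⟩
  rw [mul_comm N' N] at hq'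
  push_cast
  rw [← hp, ← hp', mul_add, pow_add]
  congr 1
  · nth_rewrite 1 [hq]; ring
  · nth_rewrite 1 [hq']; ring

lemma RatGF.div {a : PowerSeries ℚ} {w : ℕ} (hw : 0 < w)
    (h : RatGF ((1 - PowerSeries.X ^ w) * a)) : RatGF a := by
  obtain ⟨N, hN, m, p, hp⟩ := h
  obtain ⟨q, hq⟩ := one_sub_pow_factor N w m
  obtain ⟨q', hq'⟩ := one_sub_pow_factor w N 1
  refine ⟨N * w, Nat.mul_pos hN hw, m + 1, q * q' * p, ?_⟩
  rw [mul_comm w N, pow_one, pow_one] at hq'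
  push_cast
  rw [← hp, pow_succ, hq, hq']; ring

lemma RatGF.zero : RatGF 0 := ⟨1, one_pos, 0, 0, by simp⟩

lemma RatGF.sum {ι : Type*} (s : Finset ι) (f : ι → PowerSeries ℚ) (h : ∀ i ∈ s, RatGF (f i)) :
    RatGF (∑ i ∈ s, f i) :=
  Finset.sum_induction f RatGF (fun _ _ => RatGF.add) RatGF.zero h

noncomputable def psSection (N i : ℕ) (a : PowerSeries ℚ) : PowerSeries ℚ :=
  PowerSeries.mk fun j => PowerSeries.coeff (i + N * j) a

lemma psSection_mul {N i : ℕ} (hi : i < N) (a : PowerSeries ℚ) :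
    psSection N i ((1 - PowerSeries.X ^ N) * a) = (1 - PowerSeries.X) * psSection N i a := by
  ext j
  rw [sub_mul, sub_mul, one_mul, one_mul, map_sub]
  simp only [psSection, PowerSeries.coeff_mk, map_sub, PowerSeries.coeff_X_pow_mul']
  congr 1
  cases j with
  | zero => simp; omega
  | succ j =>
    rw [PowerSeries.coeff_succ_X_mul, PowerSeries.coeff_mk, if_pos (by rw [mul_add]; omega)]
    congr 2
    rw [mul_add]; omega

lemma psSection_mul_pow {N i : ℕ} (hi : i < N) (m : ℕ) (a : PowerSeries ℚ) :
    psSection N i ((1 - PowerSeries.X ^ N) ^ m * a) = (1 - PowerSeries.X) ^ m * psSection N i a := by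
  induction m generalizing a with
  | zero => simp
  | succ m ih => rw [pow_succ, mul_assoc, ih, psSection_mul hi]; ring

lemma psSection_poly {N i : ℕ} (hN : 0 < N) (p : Polynomial ℚ) :
    ∃ q : Polynomial ℚ, psSection N i p = (q : PowerSeries ℚ) := by
  refine ⟨PowerSeries.trunc (p.natDegree + 1) (psSection N i p), ?_⟩
  ext j
  rw [Polynomial.coeff_coe, PowerSeries.coeff_trunc]
  split_ifs with h
  · rfl
  · simp only [psSection, PowerSeries.coeff_mk, Polynomial.coeff_coe]
    apply Polynomial.coeff_eq_zero_of_natDegree_lt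
    nlinarith

lemma section_poly {N i m : ℕ} (hi : i < N) {a : PowerSeries ℚ} {p : Polynomial ℚ}
    (h : (1 - (PowerSeries.X : PowerSeries ℚ) ^ N) ^ m * a = (p : PowerSeries ℚ)) :
    ∃ (q : Polynomial ℚ) (J : ℕ), ∀ j, J ≤ j → PowerSeries.coeff (i + N * j) a = q.eval (j : ℚ) := by
  obtain ⟨r, hr⟩ := psSection_poly (N := N) (i := i) (by omega) p
  rw [← h, psSection_mul_pow hi] at hr
  refine ⟨Polynomial.hilbertPoly r m, r.natDegree + 1, fun j hj => ?_⟩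
  rw [← Polynomial.coeff_mul_invOneSubPow_eq_hilbertPoly_eval m (by omega : r.natDegree < j), ← hr,
    ← PowerSeries.invOneSubPow_inv_eq_one_sub_pow, mul_comm _ ((PowerSeries.invOneSubPow ℚ m : (PowerSeries ℚ)ˣ) : PowerSeries ℚ),
    ← mul_assoc, Units.val_inv, one_mul]
  simp [psSection]

lemma RatGF.quasi {a : ℕ → ℕ} (h : RatGF (PowerSeries.mk fun n => (a n : ℚ))) :
    QuasiPolynomialCount a := by
  obtain ⟨N, hN, m, p, hp⟩ := h
  haveI : NeZero N := ⟨hN.ne'⟩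
  have key : ∀ i : ZMod N, ∃ (q : Polynomial ℚ) (J : ℕ), ∀ j, J ≤ j →
      PowerSeries.coeff (i.val + N * j) (PowerSeries.mk fun n => (a n : ℚ)) = q.eval (j : ℚ) :=
    fun i => section_poly (ZMod.val_lt i) hp
  choose q J hq using key
  let P : ZMod N → Polynomial ℚ := fun i =>
    (q i).comp (Polynomial.C (1 / (N : ℚ)) * (Polynomial.X - Polynomial.C (i.val : ℚ)))
  refine ⟨fun n => (P (n : ZMod N)).eval (n : ℚ), ⟨N, hN, P, fun n => rfl⟩,
    N * (∑ i, J i + 1), fun n hn => ?_⟩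
  have h1 := hq (n : ZMod N) (n / N) (by
    have : J (n : ZMod N) ≤ ∑ i, J i := Finset.single_le_sum (f := J) (fun _ _ => Nat.zero_le _) (mem_univ _)
    rw [Nat.le_div_iff_mul_le hN]
    nlinarith)
  have h2 : ((n : ZMod N)).val + N * (n / N) = n := by
    rw [ZMod.val_natCast]; exact Nat.mod_add_div n N
  rw [PowerSeries.coeff_mk, h2] at h1
  rw [h1]
  simp only [P, Int.cast_natCast, Polynomial.eval_comp, Polynomial.eval_mul, Polynomial.eval_C,
    Polynomial.eval_sub, Polynomial.eval_X]
  congr 1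
  have h3 : (n : ℚ) = ((n : ZMod N)).val + N * ((n / N : ℕ) : ℚ) := by exact_mod_cast h2.symm
  rw [h3]
  have : (N : ℚ) ≠ 0 := by exact_mod_cast hN.ne'
  rw [← h3]
  field_simp
  linarith

/-- weighted counting -/
def wset {d : ℕ} (w : Fin d → ℕ) (D : Set (Fin d → ℕ)) (n : ℕ) : Set (Fin d → ℕ) :=
  {γ | γ ∈ D ∧ ∑ i, w i * γ i = n}

noncomputable def wgf {d : ℕ} (w : Fin d → ℕ) (D : Set (Fin d → ℕ)) : PowerSeries ℚ :=
  PowerSeries.mk fun n => ((wset w D n).ncard : ℚ)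

lemma wset_finite {d : ℕ} (w : Fin d → ℕ) (hw : ∀ i, 0 < w i) (D : Set (Fin d → ℕ)) (n : ℕ) :
    (wset w D n).Finite := by
  apply (Set.finite_Iic (fun _ : Fin d => n)).subset
  rintro γ ⟨-, h⟩ i
  have : w i * γ i ≤ ∑ i, w i * γ i :=
    Finset.single_le_sum (f := fun i => w i * γ i) (fun _ _ => Nat.zero_le _) (mem_univ i)
  have := hw i
  show γ i ≤ n
  nlinarith

lemma wgf_rec {d : ℕ} (w : Fin (d + 1) → ℕ) (hw : ∀ i, 0 < w i) (D : Set (Fin (d + 1) → ℕ)) :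
    wgf w D = wgf (fun i => w i.succ) {x | Fin.cons 0 x ∈ D} +
      PowerSeries.X ^ (w 0) *
        wgf w {γ | (Fin.cons (γ 0 + 1) (Fin.tail γ) : Fin (d + 1) → ℕ) ∈ D} := by
  ext n
  rw [map_add, PowerSeries.coeff_X_pow_mul']
  simp only [wgf, PowerSeries.coeff_mk]
  set A := wset (fun i => w i.succ) {x | Fin.cons 0 x ∈ D} n
  set S : Set (Fin (d + 1) → ℕ) := {γ | (Fin.cons (γ 0 + 1) (Fin.tail γ) : Fin (d + 1) → ℕ) ∈ D}
  let f0 : (Fin d → ℕ) → (Fin (d + 1) → ℕ) := fun x => Fin.cons 0 x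
  let f1 : (Fin (d + 1) → ℕ) → (Fin (d + 1) → ℕ) := fun γ => Fin.cons (γ 0 + 1) (Fin.tail γ)
  have i0 : Function.Injective f0 := fun x y h => (Fin.cons_injective2 h).2
  have i1 : Function.Injective f1 := fun x y h => by
    have := Fin.cons_injective2 h
    rw [← Fin.cons_self_tail x, ← Fin.cons_self_tail y, this.2]
    congr 1
    have := this.1
    omega
  let B : Set (Fin (d + 1) → ℕ) := if w 0 ≤ n then wset w S (n - w 0) else ∅
  have hB : (if w 0 ≤ n then ((wset w S (n - w 0)).ncard : ℚ) else 0) = (B.ncard : ℚ) := by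
    simp only [B]; split_ifs <;> simp
  have fB : B.Finite := by
    simp only [B]; split_ifs
    · exact wset_finite w hw _ _
    · exact Set.finite_empty
  have fA : A.Finite := wset_finite _ (fun i => hw _) _ _
  have hU : wset w D n = f0 '' A ∪ f1 '' B := by
    ext γ
    constructor
    · rintro ⟨hD, hs⟩
      rw [Fin.sum_univ_succ] at hs
      rcases Nat.eq_zero_or_pos (γ 0) with h0 | h0
      · left
        refine ⟨Fin.tail γ, ⟨?_, ?_⟩, ?_⟩
        · show Fin.cons 0 (Fin.tail γ) ∈ D
          rw [← h0, Fin.cons_self_tail]; exact hD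
        · rw [h0] at hs; simpa [Fin.tail] using hs
        · show Fin.cons 0 (Fin.tail γ) = γ
          rw [← h0, Fin.cons_self_tail]
      · right
        have hc : f1 (Fin.cons (γ 0 - 1) (Fin.tail γ)) = γ := by
          show Fin.cons ((Fin.cons (γ 0 - 1) (Fin.tail γ) : Fin (d + 1) → ℕ) 0 + 1)
            (Fin.tail (Fin.cons (γ 0 - 1) (Fin.tail γ) : Fin (d + 1) → ℕ)) = γ
          rw [Fin.cons_zero, Fin.tail_cons, Nat.sub_add_cancel h0, Fin.cons_self_tail]
        obtain ⟨c, hc'⟩ : ∃ c, γ 0 = c + 1 := ⟨γ 0 - 1, by omega⟩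
        refine ⟨Fin.cons (γ 0 - 1) (Fin.tail γ), ?_, hc⟩
        have hle : w 0 ≤ n := by rw [hc', mul_add] at hs; omega
        simp only [B, if_pos hle]
        refine ⟨?_, ?_⟩
        · show f1 _ ∈ D
          rw [hc]; exact hD
        · rw [Fin.sum_univ_succ]
          simp only [Fin.cons_zero, Fin.cons_succ, Fin.tail, hc', Nat.add_sub_cancel]
          rw [hc', mul_add] at hs
          omega
    · rintro (⟨x, ⟨h1, h2⟩, rfl⟩ | ⟨x, hx, rfl⟩)
      · exact ⟨h1, by rw [Fin.sum_univ_succ]; simpa [f0] using h2⟩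
      · simp only [B] at hx
        split_ifs at hx with hle
        · obtain ⟨h1, h2⟩ := hx
          refine ⟨h1, ?_⟩
          rw [Fin.sum_univ_succ] at h2 ⊢
          simp only [f1, Fin.cons_zero, Fin.cons_succ, Fin.tail, mul_add]
          omega
        · exact hx.elim
  have hdis : Disjoint (f0 '' A) (f1 '' B) := by
    rw [Set.disjoint_left]
    rintro _ ⟨x, -, rfl⟩ ⟨y, -, h⟩
    have := (Fin.cons_injective2 h).1
    omega
  rw [hB, hU, Set.ncard_union_eq hdis (fA.image _) (fB.image _), Set.ncard_image_of_injective _ i0,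
    Set.ncard_image_of_injective _ i1]
  push_cast; rfl

lemma slices_stab {d : ℕ} (D : Set (Fin (d + 1) → ℕ)) (hD : IsLowerSet D) :
    ∃ T, ∀ t, T ≤ t → ∀ x : Fin d → ℕ, (Fin.cons T x : Fin (d + 1) → ℕ) ∈ D →
      (Fin.cons t x : Fin (d + 1) → ℕ) ∈ D := by
  by_contra! hcon
  choose t ht x hx hx' using hcon
  let s : ℕ → ℕ := fun i => t^[i] 0
  have hs : ∀ i, s (i + 1) = t (s i) := fun i => Function.iterate_succ_apply' t i 0
  have hmono : Monotone s := monotone_nat_of_le_succ fun i => by rw [hs]; exact ht _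
  obtain ⟨i, j, hij, hle⟩ := wellQuasiOrdered_le (α := Fin d → ℕ) (fun i => x (s i))
  apply hx' (s i)
  refine hD ?_ (hx (s j))
  rw [← hs]
  exact Fin.cons_le_cons.2 ⟨hmono hij, hle⟩

lemma wgf_rat (d : ℕ) : ∀ (w : Fin d → ℕ), (∀ i, 0 < w i) → ∀ D : Set (Fin d → ℕ), IsLowerSet D →
    RatGF (wgf w D) := by
  induction d with
  | zero =>
    intro w hw D hD
    refine ⟨1, one_pos, 0, PowerSeries.trunc 1 (wgf w D), ?_⟩
    ext n
    rw [pow_zero, one_mul, Polynomial.coeff_coe, PowerSeries.coeff_trunc]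
    split_ifs with h
    · rfl
    · simp only [wgf, PowerSeries.coeff_mk]
      have : wset w D n = ∅ := by
        ext γ
        simp [wset]; omega
      rw [this]; simp
  | succ d ih =>
    intro w hw D hD
    obtain ⟨T, hT⟩ := slices_stab D hD
    have low0 : ∀ D : Set (Fin (d + 1) → ℕ), IsLowerSet D →
        IsLowerSet {x : Fin d → ℕ | (Fin.cons 0 x : Fin (d + 1) → ℕ) ∈ D} := by
      intro D hD a b hba ha
      exact hD (Fin.cons_le_cons.2 ⟨le_rfl, hba⟩) ha
    induction T generalizing D with
    | zero =>
      have hr := wgf_rec w hw D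
      have hS : {γ | (Fin.cons (γ 0 + 1) (Fin.tail γ) : Fin (d + 1) → ℕ) ∈ D} = D := by
        ext γ
        constructor
        · intro h
          refine hD ?_ h
          conv_lhs => rw [← Fin.cons_self_tail γ]
          exact Fin.cons_le_cons.2 ⟨Nat.le_succ _, le_rfl⟩
        · intro h
          refine hT _ (Nat.zero_le _) _ (hD ?_ h)
          conv_rhs => rw [← Fin.cons_self_tail γ]
          exact Fin.cons_le_cons.2 ⟨Nat.zero_le _, le_rfl⟩
      rw [hS] at hr
      apply RatGF.div (hw 0)
      have : (1 - PowerSeries.X ^ w 0) * wgf w D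
          = wgf (fun i => w i.succ) {x | Fin.cons 0 x ∈ D} := by
        rw [sub_mul, one_mul, sub_eq_iff_eq_add]; exact hr
      rw [this]
      exact ih _ (fun i => hw _) _ (low0 D hD)
    | succ T ihT =>
      rw [wgf_rec w hw D]
      refine RatGF.add (ih _ (fun i => hw _) _ (low0 D hD)) ?_
      have := RatGF.polyMul (ihT {γ | (Fin.cons (γ 0 + 1) (Fin.tail γ) : Fin (d + 1) → ℕ) ∈ D}
        ?_ ?_) (Polynomial.X ^ (w 0))
      · simpa using this
      · intro a b hba ha
        exact hD (Fin.cons_le_cons.2 ⟨Nat.succ_le_succ (hba 0), fun i => hba i.succ⟩) ha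
      · intro t ht x hx
        simp only [Set.mem_ofPred_eq, Fin.cons_zero, Fin.tail_cons] at hx ⊢
        exact hT _ (by omega) _ hx

lemma lower_of_down {k : ℕ} {M : Set (Fin k → ℕ)}
    (hdown : ∀ β ∈ M, ∀ j : Fin k, 0 < β j → Function.update β j (β j - 1) ∈ M) :
    IsLowerSet M := by
  have key : ∀ n, ∀ β ∈ M, ∑ j, β j = n → ∀ γ ≤ β, γ ∈ M := by
    intro n
    induction n with
    | zero =>
      intro β hβ hs γ hγ
      have : γ = β := by
        ext j
        have h1 : β j = 0 := by
          rw [Finset.sum_eq_zero_iff] at hs; exact hs j (mem_univ j)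
        have h2 : γ j ≤ β j := hγ j
        rw [h1] at h2 ⊢
        exact Nat.le_zero.1 h2
      rwa [this]
    | succ n ih =>
      intro β hβ hs γ hγ
      by_cases h : γ = β
      · rwa [h]
      · obtain ⟨j, hj⟩ : ∃ j, γ j ≠ β j := by
          by_contra! hc; exact h (funext hc)
        have hlt : γ j < β j := lt_of_le_of_ne (hγ j) hj
        refine ih _ (hdown β hβ j (by omega)) ?_ γ ?_
        · rw [Finset.sum_update_of_mem (mem_univ j)]
          rw [← Finset.add_sum_erase _ _ (mem_univ j), ← Finset.sdiff_singleton_eq_erase] at hs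
          omega
        · intro i
          by_cases hi : i = j
          · subst hi; simp; omega
          · simp [hi]; exact hγ i
  intro β γ hγ hβ
  exact key _ β hβ rfl γ hγ

lemma fix_count {k : ℕ} {M : Set (Fin k → ℕ)} (hM : IsLowerSet M) (g : Equiv.Perm (Fin k)) :
    RatGF (PowerSeries.mk fun n =>
      (({β | (β ∈ M ∧ ∑ j, β j = n) ∧ β ∘ ⇑g = β} : Set (Fin k → ℕ)).ncard : ℚ)) := by
  classical
  let Q := Quotient (Equiv.Perm.SameCycle.setoid g)
  let e : Q ≃ Fin (Fintype.card Q) := Fintype.equivFin Q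
  let r : Fin k → Fin (Fintype.card Q) := fun j => e (Quotient.mk _ j)
  have hr : Function.Surjective r := e.surjective.comp Quotient.mk_surjective
  have hrg : ∀ j, r (g j) = r j := fun j => by
    simp only [r]; congr 1
    apply Quotient.sound
    exact Equiv.Perm.sameCycle_apply_left.2 (Equiv.Perm.SameCycle.refl g j)
  let w : Fin (Fintype.card Q) → ℕ := fun i => (univ.filter fun j => r j = i).card
  have hw : ∀ i, 0 < w i := fun i => by
    obtain ⟨j, hj⟩ := hr i
    exact Finset.card_pos.2 ⟨j, by simp [hj]⟩
  let D : Set (Fin (Fintype.card Q) → ℕ) := {γ | γ ∘ r ∈ M}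
  have hD : IsLowerSet D := fun a b hba ha => hM (fun j => hba (r j)) ha
  have hsum : ∀ γ : Fin (Fintype.card Q) → ℕ, ∑ j, (γ ∘ r) j = ∑ i, w i * γ i := by
    intro γ
    rw [← Finset.sum_fiberwise (s := univ) (g := r)]
    refine Finset.sum_congr rfl fun i _ => ?_
    rw [Finset.sum_congr rfl (g := fun _ => γ i), Finset.sum_const, smul_eq_mul]
    intro j hj
    simp at hj; simp [hj]
  have := wgf_rat _ w hw D hD
  convert this using 1
  unfold wgf
  congr 1
  ext n
  congr 1
  have himg : ({β | (β ∈ M ∧ ∑ j, β j = n) ∧ β ∘ ⇑g = β} : Set (Fin k → ℕ))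
      = (fun γ : Fin (Fintype.card Q) → ℕ => γ ∘ r) '' wset w D n := by
    ext β
    constructor
    · rintro ⟨⟨h1, h2⟩, h3⟩
      have h4 : ∀ a b, r a = r b → β a = β b := by
        intro a b hab
        have hab' : Equiv.Perm.SameCycle g a b := Quotient.exact (e.injective hab)
        have hz : ∀ a, β (g a) = β a := fun a => congrFun h3 a
        obtain ⟨m, hm⟩ : ∃ m : ℕ, (g ^ m) a = b := by
          obtain ⟨m, _, hm⟩ := hab'.exists_pow_eq'
          exact ⟨m, hm⟩
        rw [← hm]
        clear hm
        induction m with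
        | zero => simp
        | succ m ih => rw [pow_succ', Equiv.Perm.mul_apply, hz]; exact ih
      obtain ⟨γ, rfl⟩ : ∃ γ : Fin (Fintype.card Q) → ℕ, γ ∘ r = β := by
        refine ⟨fun i => β (Function.surjInv hr i), ?_⟩
        ext j
        exact h4 _ _ (Function.surjInv_eq hr _)
      exact ⟨γ, ⟨h1, by rw [← hsum]; exact h2⟩, rfl⟩
    · rintro ⟨γ, ⟨h1, h2⟩, rfl⟩
      refine ⟨⟨h1, by rw [← h2, ← hsum]⟩, ?_⟩
      ext j; simp [hrg]
  rw [himg, Set.ncard_image_of_injective _ hr.injective_comp_right]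

lemma burnside_count (k : ℕ) (G : Subgroup (Equiv.Perm (Fin k))) (M : Set (Fin k → ℕ))
    (hG : ∀ β ∈ M, ∀ g ∈ G, (β ∘ ⇑g) ∈ M) (n : ℕ) [Fintype G] :
    ∑ g : G, ({β | (β ∈ M ∧ ∑ j, β j = n) ∧ β ∘ ⇑(g : Equiv.Perm (Fin k)) = β} :
        Set (Fin k → ℕ)).ncard =
      Nat.card (Quot (fun (β γ : {β : Fin k → ℕ // β ∈ M ∧ ∑ j, β j = n}) =>
        ∃ g ∈ G, β.1 ∘ ⇑g = γ.1)) * Fintype.card G := by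
  classical
  let X := {β : Fin k → ℕ // β ∈ M ∧ ∑ j, β j = n}
  haveI : Finite X := by
    apply Set.Finite.subset (Set.finite_Iic (fun _ : Fin k => n))
    rintro γ ⟨-, h⟩ i
    rw [← h]
    exact Finset.single_le_sum (f := γ) (fun _ _ => Nat.zero_le _) (mem_univ i)
  haveI : Fintype X := Fintype.ofFinite X
  letI act : MulAction G X :=
    { smul := fun g β => ⟨β.1 ∘ ⇑((g⁻¹ : G) : Equiv.Perm (Fin k)),
        hG _ β.2.1 _ (g⁻¹).2, by
          exact (Equiv.sum_comp ((g⁻¹ : G) : Equiv.Perm (Fin k)) β.1).trans β.2.2⟩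
      one_smul := fun β => by
        apply Subtype.ext
        show β.1 ∘ ⇑(((1 : G)⁻¹ : G) : Equiv.Perm (Fin k)) = β.1
        simp
      mul_smul := fun g h β => by
        apply Subtype.ext
        show β.1 ∘ ⇑(((g * h)⁻¹ : G) : Equiv.Perm (Fin k)) =
          (β.1 ∘ ⇑((h⁻¹ : G) : Equiv.Perm (Fin k))) ∘ ⇑((g⁻¹ : G) : Equiv.Perm (Fin k))
        rw [mul_inv_rev]; rfl }
  have hact : ∀ (g : G) (β : X), (g • β).1 = β.1 ∘ ⇑((g⁻¹ : G) : Equiv.Perm (Fin k)) :=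
    fun _ _ => rfl
  have hB := MulAction.sum_card_fixedBy_eq_card_orbits_mul_card_group G X
  have hQ : Nat.card (Quot (fun (β γ : X) => ∃ g ∈ G, β.1 ∘ ⇑g = γ.1)) =
      Fintype.card (Quotient (MulAction.orbitRel G X)) := by
    rw [← Nat.card_eq_fintype_card]
    refine Nat.card_congr (Quot.congrRight ?_)
    intro β γ
    show _ ↔ β ∈ MulAction.orbit G γ
    constructor
    · rintro ⟨g, hg, h⟩
      refine ⟨⟨g, hg⟩, Subtype.ext ?_⟩
      show (_ • γ).1 = _
      rw [hact, ← h]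
      ext j; simp
    · rintro ⟨g, rfl⟩
      refine ⟨g, g.2, ?_⟩
      show (g • γ).1 ∘ _ = _
      rw [hact]
      ext j; simp
  rw [hQ, ← hB]
  refine Finset.sum_congr rfl fun g _ => ?_
  rw [← Nat.card_eq_fintype_card, ← Nat.card_coe_set_eq]
  refine Nat.card_congr ?_
  refine (Equiv.subtypeSubtypeEquivSubtypeInter _ _).symm.trans (Equiv.subtypeEquivRight ?_)
  intro β
  show β.1 ∘ _ = β.1 ↔ g • β = β
  rw [Subtype.ext_iff, hact]
  constructor
  · intro h
    nth_rewrite 1 [← h]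
    ext j; simp
  · intro h
    nth_rewrite 1 [← h]
    ext j; simp

/-- Let `G ≤ Sym([k])` and let `M ⊆ ℕ^k` be `G`-stable and downward closed in the sense
that one may decrease any positive coordinate by one.  Then the number of `G`-orbits on
the degree-`n` part `M_n` of `M` is a quasipolynomial in `n` for `n ≫ 0`. -/
theorem orbit_count_downward_closed_monomial_sets
    (k : ℕ) (G : Subgroup (Equiv.Perm (Fin k))) (M : Set (Fin k → ℕ))
    (hG : ∀ β ∈ M, ∀ g ∈ G, (β ∘ ⇑g) ∈ M)
    (hdown : ∀ β ∈ M, ∀ j : Fin k, 0 < β j → Function.update β j (β j - 1) ∈ M) :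
    QuasiPolynomialCount (fun n =>
      Nat.card (Quot (fun (β γ : {β : Fin k → ℕ // β ∈ M ∧ ∑ j, β j = n}) =>
        ∃ g ∈ G, β.1 ∘ ⇑g = γ.1))) := by
  classical
  haveI : Fintype G := Fintype.ofFinite G
  apply RatGF.quasi
  have hM := lower_of_down hdown
  have h := RatGF.polyMul (RatGF.sum (univ : Finset G) _
    (fun g _ => fix_count hM (g : Equiv.Perm (Fin k)))) (Polynomial.C (1 / (Fintype.card G : ℚ)))
  convert h using 1
  ext n
  have hb := burnside_count k G M hG n
  have hc : (Fintype.card G : ℚ) ≠ 0 := by exact_mod_cast Fintype.card_ne_zero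
  rw [Polynomial.coe_C, PowerSeries.coeff_C_mul, map_sum]
  simp only [PowerSeries.coeff_mk]
  rw [← Nat.cast_sum, hb]
  push_cast
  field_simp
end

section
/- Let k ∈ ℕ and let G be a subgroup of the symmetric group on [k]. For each n ∈ ℕ let E_n be a set of maps [n] → [k] such that: (i) for all g ∈ G and α ∈ E_n, the composition g∘α lies in E_n; and (ii) for every injection π : [m] → [n] and every α ∈ E_n, the composition α∘π lies in E_m. Let the group G × Sym([n]) act on E_n by (g,τ)·α = g∘α∘τ⁻¹. Then the number of (G × Sym([n]))-orbits on E_n (equivalently, the number of Sym([n])-orbits on the quotient E_n/G) is a quasipolynomial in n for all n ≫ 0. -/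
section aux
open Filter Polynomial

def EQP (a : ℕ → ℚ) : Prop :=
  ∃ N : ℕ, 0 < N ∧ ∀ i : ℕ, ∃ P : ℚ[X], ∀ᶠ t : ℕ in atTop, a (i + N * t) = P.eval (t : ℚ)

lemma EQP.mul_period {a : ℕ → ℚ} {N : ℕ} 
    (h : ∀ i : ℕ, ∃ P : ℚ[X], ∀ᶠ t : ℕ in atTop, a (i + N * t) = P.eval (t : ℚ)) (M : ℕ) (hM : 0 < M) :
    ∀ i : ℕ, ∃ P : ℚ[X], ∀ᶠ t : ℕ in atTop, a (i + N * M * t) = P.eval (t : ℚ) := by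
  intro i
  obtain ⟨P, hP⟩ := h i
  refine ⟨P.comp (C (M : ℚ) * X), ?_⟩
  have : Tendsto (fun t : ℕ => M * t) atTop atTop := tendsto_id.const_mul_atTop' hM
  filter_upwards [this.eventually hP] with t ht
  rw [mul_assoc, ht]
  simp

lemma EQP.zero : EQP (fun _ => 0) := ⟨1, one_pos, fun _ => ⟨0, by simp⟩⟩

lemma EQP.add {a b : ℕ → ℚ} (ha : EQP a) (hb : EQP b) : EQP (fun n => a n + b n) := by
  obtain ⟨N, hN, ha⟩ := ha
  obtain ⟨M, hM, hb⟩ := hb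
  refine ⟨N * M, by positivity, fun i => ?_⟩
  obtain ⟨P, hP⟩ := EQP.mul_period ha M hM i
  obtain ⟨Q, hQ⟩ := EQP.mul_period hb N hN i
  refine ⟨P + Q, ?_⟩
  filter_upwards [hP, hQ] with t h1 h2
  rw [h1, mul_comm N M, h2]; simp

lemma EQP.smul {a : ℕ → ℚ} (ha : EQP a) (c : ℚ) : EQP (fun n => c * a n) := by
  obtain ⟨N, hN, ha⟩ := ha
  refine ⟨N, hN, fun i => ?_⟩
  obtain ⟨P, hP⟩ := ha i
  refine ⟨C c * P, ?_⟩
  filter_upwards [hP] with t h1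
  rw [h1]; simp

lemma EQP.sum {ι : Type*} (s : Finset ι) {a : ι → ℕ → ℚ} (ha : ∀ i ∈ s, EQP (a i)) :
    EQP (fun n => ∑ i ∈ s, a i n) := by
  classical
  induction s using Finset.induction_on with
  | empty => simpa using EQP.zero
  | insert i s hi ih =>
    simp only [Finset.sum_insert hi]
    exact (ha i (by simp)).add (ih fun j hj => ha j (by simp [hj]))

lemma EQP.shift {a : ℕ → ℚ} (ha : EQP a) (s : ℕ) : EQP (fun n => a (n + s)) := by
  obtain ⟨N, hN, ha⟩ := ha
  refine ⟨N, hN, fun i => ?_⟩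
  obtain ⟨P, hP⟩ := ha (i + s)
  refine ⟨P, ?_⟩
  filter_upwards [hP] with t h1
  rw [← h1]; congr 1; ring

lemma EQP.unshift {a : ℕ → ℚ} {s : ℕ} (ha : EQP (fun n => a (n + s))) : EQP a := by
  obtain ⟨N, hN, ha⟩ := ha
  refine ⟨N, hN, fun i => ?_⟩
  obtain ⟨P, hP⟩ := ha (i + N * s - s)
  refine ⟨P.comp (X - C (s : ℚ)), ?_⟩
  have : Tendsto (fun t : ℕ => t - s) atTop atTop := tendsto_sub_atTop_nat s
  filter_upwards [this.eventually hP, eventually_ge_atTop s] with t h1 h2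
  obtain ⟨u, rfl⟩ := Nat.exists_eq_add_of_le h2
  have h3 : s ≤ N * s := Nat.le_mul_of_pos_left s hN
  have h4 : i + N * s - s + N * (s + u - s) + s = i + N * (s + u) := by
    rw [Nat.add_sub_cancel_left, mul_add]; omega
  simp only [h4] at h1
  rw [h1]; simp

lemma exists_antidiff (q : ℚ[X]) : ∃ P : ℚ[X], ∀ x : ℚ, P.eval (x + 1) - P.eval x = q.eval x := by
  induction q using Polynomial.induction_on' with
  | add p q hp hq =>
    obtain ⟨P, hP⟩ := hp
    obtain ⟨Q, hQ⟩ := hq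
    refine ⟨P + Q, fun x => ?_⟩
    simp only [eval_add, ← hP, ← hQ]; ring
  | monomial n c =>
    refine ⟨C (c / (n + 1)) * Polynomial.bernoulli (n + 1), fun x => ?_⟩
    have := Polynomial.bernoulli_eval_one_add (n + 1) x
    rw [add_comm 1 x] at this
    have h : (n : ℚ) + 1 ≠ 0 := by positivity
    simp only [eval_mul, eval_C, this, eval_monomial]
    push_cast
    field_simp
    ring

lemma EQP.of_diff {a b : ℕ → ℚ} {w : ℕ} (hw : 0 < w) (hb : EQP b)
    (h : ∀ n, a (n + w) = a n + b n) : EQP a := by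
  obtain ⟨N, hN, hb⟩ := hb
  refine ⟨N * w, by positivity, fun i => ?_⟩
  have hb' := EQP.mul_period hb w hw
  have key : ∀ m n, a (n + m * w) = a n + ∑ j ∈ Finset.range m, b (n + j * w) := by
    intro m n
    induction m with
    | zero => simp
    | succ m ih =>
      rw [Finset.sum_range_succ, ← add_assoc, ← ih, ← h]; congr 1; ring
  choose Q hQ using fun j => hb' (i + j * w)
  obtain ⟨P, hP⟩ := exists_antidiff (∑ j ∈ Finset.range N, Q j)
  have hall : ∀ᶠ t : ℕ in atTop, ∀ j ∈ Finset.range N,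
      b (i + j * w + N * w * t) = (Q j).eval (t : ℚ) :=
    (Filter.eventually_all_finset _).2 fun j _ => hQ j
  obtain ⟨t0, ht0⟩ := eventually_atTop.1 hall
  refine ⟨P + C (a (i + N * w * t0) - P.eval (t0 : ℚ)), eventually_atTop.2 ⟨t0, fun t ht => ?_⟩⟩
  induction t, ht using Nat.le_induction with
  | base => simp
  | succ t ht ih =>
    have e : i + N * w * (t + 1) = (i + N * w * t) + N * w := by ring
    have hs : ∑ j ∈ Finset.range N, b (i + N * w * t + j * w) =
        (∑ j ∈ Finset.range N, Q j).eval (t : ℚ) := by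
      rw [eval_finsetSum]
      refine Finset.sum_congr rfl fun j hj => ?_
      rw [← ht0 t ht j hj]; congr 1; ring
    rw [e, key, hs, ih, ← hP]
    simp
    ring

lemma EQP.toQuasi {a : ℕ → ℕ} (ha : EQP (fun n => (a n : ℚ))) : 
  ∃ f : ℤ → ℚ, (∃ N : ℕ, 0 < N ∧ ∃ p : ZMod N → Polynomial ℚ,
    ∀ n : ℤ, f n = (p (n : ZMod N)).eval (n : ℚ)) ∧ ∃ n₀ : ℕ, ∀ n : ℕ, n₀ ≤ n → (a n : ℚ) = f n := by
  obtain ⟨N, hN, ha⟩ := ha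
  choose P hP using ha
  have : NeZero N := ⟨hN.ne'⟩
  let p : ZMod N → ℚ[X] := fun z => (P z.val).comp ((X - C (z.val : ℚ)) * C (N : ℚ)⁻¹)
  refine ⟨fun n => (p (n : ZMod N)).eval (n : ℚ), ⟨N, hN, p, fun n => rfl⟩, ?_⟩
  have hall : ∀ᶠ t : ℕ in atTop, ∀ j ∈ Finset.range N,
      (a (j + N * t) : ℚ) = (P j).eval (t : ℚ) :=
    (Filter.eventually_all_finset _).2 fun j _ => hP j
  obtain ⟨t0, ht0⟩ := eventually_atTop.1 hall
  refine ⟨N * t0, fun n hn => ?_⟩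
  have h1 := ht0 (n / N) ((Nat.le_div_iff_mul_le hN).2 (by rwa [mul_comm])) (n % N)
    (Finset.mem_range.2 (Nat.mod_lt _ hN))
  rw [Nat.mod_add_div] at h1
  rw [h1]
  have h2 : ((n / N : ℕ) : ℚ) = ((n : ℚ) - (n % N : ℕ)) * (N : ℚ)⁻¹ := by
    have : (n : ℚ) = (n % N : ℕ) + N * (n / N : ℕ) := by exact_mod_cast (Nat.mod_add_div n N).symm
    have hN' : (N : ℚ) ≠ 0 := by exact_mod_cast hN.ne'
    field_simp
    linarith
  simp only [p, Int.cast_natCast, ZMod.val_natCast, h2, eval_comp, eval_mul, eval_sub, eval_X, eval_C]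

/-! counting -/
def lev {r : ℕ} (w : Fin r → ℕ) (D : Set (Fin r → ℕ)) (n : ℕ) : Set (Fin r → ℕ) :=
  {c | c ∈ D ∧ ∑ i, w i * c i = n}

lemma lev_finite {r : ℕ} (w : Fin r → ℕ) (hw : ∀ i, 0 < w i) (D : Set (Fin r → ℕ)) (n : ℕ) :
    (lev w D n).Finite := by
  refine (Set.finite_Iic (fun _ : Fin r => n)).subset ?_
  rintro c ⟨-, hc⟩ i
  calc c i ≤ w i * c i := Nat.le_mul_of_pos_left _ (hw i)
    _ ≤ ∑ i, w i * c i := Finset.single_le_sum (f := fun i => w i * c i) (fun _ _ => Nat.zero_le _) (Finset.mem_univ i)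
    _ = n := hc

lemma exists_stable {α : Type*} [Preorder α] [WellQuasiOrderedLE α] (D : ℕ → Set α)
    (hD : ∀ j, IsLowerSet (D j)) (ha : Antitone D) : ∃ j, D j = D (j + 1) := by
  by_contra! h
  have : ∀ j, ∃ c, c ∈ D j ∧ c ∉ D (j + 1) := by
    intro j
    by_contra! h'
    exact h j (Set.Subset.antisymm h' (ha (Nat.le_succ j)))
  choose c hc hc' using this
  obtain ⟨m, n, hmn, hle⟩ := wellQuasiOrdered_le c
  exact hc' m (hD _ hle (ha hmn (hc n)))

lemma lev_step {r : ℕ} (w : Fin (r + 1) → ℕ) (hw : ∀ i, 0 < w i) (D : Set (Fin (r + 1) → ℕ)) (n : ℕ) :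
    (lev w D (n + w 0)).ncard = (lev w {c | c + Pi.single 0 1 ∈ D} n).ncard +
      (lev (fun i => w i.succ) {c | (Fin.cons 0 c : Fin (r + 1) → ℕ) ∈ D} (n + w 0)).ncard := by
  have h : lev w D (n + w 0) =
      (fun c => c + Pi.single 0 1) '' (lev w {c | c + Pi.single 0 1 ∈ D} n) ∪
      (fun c => (Fin.cons 0 c : Fin (r + 1) → ℕ)) ''
        (lev (fun i => w i.succ) {c | (Fin.cons 0 c : Fin (r + 1) → ℕ) ∈ D} (n + w 0)) := by
    ext c
    simp only [lev, Set.mem_union, Set.mem_image, Set.mem_ofPred_eq]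
    constructor
    · rintro ⟨hc, hs⟩
      induction c using Fin.consCases with
      | _ x c =>
      rcases x with _ | x
      · right
        exact ⟨c, ⟨hc, by simpa [Fin.sum_univ_succ] using hs⟩, rfl⟩
      · left
        have e : (Fin.cons x c : Fin (r + 1) → ℕ) + Pi.single 0 1 = (Fin.cons (x + 1) c : Fin (r + 1) → ℕ) := by
          ext i; refine Fin.cases ?_ (fun i => ?_) i <;> simp
        refine ⟨(Fin.cons x c : Fin (r + 1) → ℕ), ⟨e ▸ hc, ?_⟩, e⟩
        simp [Fin.sum_univ_succ, mul_add] at hs ⊢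
        omega
    · rintro (⟨d, ⟨hd, hs⟩, rfl⟩ | ⟨d, ⟨hd, hs⟩, rfl⟩)
      · refine ⟨hd, ?_⟩
        simp [Fin.sum_univ_succ, mul_add] at hs ⊢
        omega
      · exact ⟨hd, by simpa [Fin.sum_univ_succ] using hs⟩
  rw [h, Set.ncard_union_eq ?_ ((lev_finite _ hw _ _).image _)
    ((lev_finite _ (fun i => hw i.succ) _ _).image _),
    Set.ncard_image_of_injective _ (add_left_injective _),
    Set.ncard_image_of_injective _ (Fin.cons_right_injective (α := fun _ => ℕ) 0)]
  rw [Set.disjoint_left]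
  rintro _ ⟨c, -, rfl⟩ ⟨d, -, h⟩
  have := congrFun h 0
  simp at this

theorem lev_EQP : ∀ {r : ℕ} (w : Fin r → ℕ) (_ : ∀ i, 0 < w i) (D : Set (Fin r → ℕ)) (_ : IsLowerSet D),
    EQP (fun n => ((lev w D n).ncard : ℚ)) := by
  intro r
  induction r with
  | zero =>
    intro w hw D hD
    apply EQP.unshift (s := 1)
    have : ∀ n, lev w D (n + 1) = ∅ := by
      intro n; ext c; simp [lev]
    simpa [this] using EQP.zero
  | succ r ih =>
    intro w hw D hD
    let Ds : ℕ → Set (Fin (r + 1) → ℕ) := fun j => {c | c + Pi.single 0 j ∈ D}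
    have hDs : ∀ j, IsLowerSet (Ds j) := fun j a b hab ha =>
      hD (add_le_add_left hab (Pi.single 0 j)) ha
    have hsucc : ∀ j, {c | c + Pi.single 0 1 ∈ Ds j} = Ds (j + 1) := by
      intro j; ext c
      simp only [Ds, Set.mem_ofPred_eq, add_assoc, ← Pi.single_add, add_comm 1 j]
    have hanti : Antitone Ds := antitone_nat_of_succ_le fun j => by
      rw [← hsucc]
      intro c hc
      exact hDs j (le_add_of_nonneg_right zero_le) hc
    have hslice : ∀ j, EQP (fun n => ((lev (fun i => w i.succ)
        {c | (Fin.cons 0 c : Fin (r + 1) → ℕ) ∈ Ds j} (n + w 0)).ncard : ℚ)) := fun j =>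
      (ih _ (fun i => hw i.succ) {c | (Fin.cons 0 c : Fin (r + 1) → ℕ) ∈ Ds j} (by
        intro a b hab ha
        exact hDs j (Fin.cons_le_cons.2 ⟨le_rfl, hab⟩) ha)).shift (w 0)
    have hstep := fun j n => lev_step w hw (Ds j) n
    simp only [hsucc] at hstep
    obtain ⟨J, hJ⟩ := exists_stable Ds hDs hanti
    have base : EQP (fun n => ((lev w (Ds J) n).ncard : ℚ)) := by
      refine EQP.of_diff (hw 0) (hslice J) fun n => ?_
      rw [hstep, ← hJ]; push_cast; rfl
    have down : ∀ j ≤ J, EQP (fun n => ((lev w (Ds (J - j)) n).ncard : ℚ)) := by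
      intro j
      induction j with
      | zero => intro _; exact base
      | succ j ihj =>
        intro hj
        apply EQP.unshift (s := w 0)
        simp only [hstep]
        have : J - (j + 1) + 1 = J - j := by omega
        rw [this]
        push_cast
        exact (ihj (by omega)).add (hslice _)
    have := down J le_rfl
    simpa [Ds] using this

lemma fix_EQP {k : ℕ} (D : Set (Fin k → ℕ)) (hD : IsLowerSet D) (g : Equiv.Perm (Fin k)) :
    EQP (fun n => (({c | c ∈ D ∧ ∑ i, c i = n ∧ c ∘ ⇑g⁻¹ = c} : Set (Fin k → ℕ)).ncard : ℚ)) := by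
  classical
  let S := Equiv.Perm.SameCycle.setoid g
  obtain ⟨r, ⟨e⟩⟩ := Finite.exists_equiv_fin (Quotient S)
  let p : Fin k → Fin r := fun i => e (Quotient.mk S i)
  have hp : Function.Surjective p := e.surjective.comp Quotient.mk_surjective
  have hg : ∀ i, p (g⁻¹ i) = p i := fun i => by
    refine congrArg e (Quotient.sound ?_)
    exact Equiv.Perm.SameCycle.symm ⟨-1, by simp⟩
  let w : Fin r → ℕ := fun q => (Finset.univ.filter fun i => p i = q).card
  have hw : ∀ q, 0 < w q := fun q => by
    obtain ⟨i, hi⟩ := hp q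
    exact Finset.card_pos.2 ⟨i, by simpa using hi⟩
  have hsum : ∀ d : Fin r → ℕ, ∑ i, d (p i) = ∑ q, w q * d q := fun d => by
    rw [← Finset.sum_fiberwise (s := Finset.univ) (g := p)]
    refine Finset.sum_congr rfl fun q _ => ?_
    rw [Finset.sum_congr rfl (g := fun _ => d q)]
    · simp [w]
    · intro i hi
      rw [(Finset.mem_filter.1 hi).2]
  have h := lev_EQP w hw {d | d ∘ p ∈ D} (fun a b hab ha => hD (fun i => hab (p i)) ha)
  convert h using 4 with n
  have : ({c | c ∈ D ∧ ∑ i, c i = n ∧ c ∘ ⇑g⁻¹ = c} : Set (Fin k → ℕ)) =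
      (fun d : Fin r → ℕ => d ∘ p) '' lev w {d | d ∘ p ∈ D} n := by
    ext c
    constructor
    · rintro ⟨hc, hs, hf⟩
      have hz : ∀ (i j : Fin k), g.SameCycle i j → c i = c j := by
        have hf' : ∀ i, c (g i) = c i := fun i => by
          have := congrFun hf (g i); simpa using this.symm
        intro i j hij
        obtain ⟨m, -, rfl⟩ := hij.exists_pow_eq'
        induction m with
        | zero => simp
        | succ m ih => 
          rw [pow_succ', Equiv.Perm.mul_apply, hf']
          exact ih ⟨m, by simp⟩
      let d0 : Quotient S → ℕ := Quotient.lift c hz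
      have hd : (fun q => d0 (e.symm q)) ∘ p = c := by
        ext i; simp [p, d0]
      refine ⟨fun q => d0 (e.symm q), ⟨?_, ?_⟩, hd⟩
      · show _ ∈ D
        rw [hd]; exact hc
      · rw [← hsum, ← hs]
        exact Finset.sum_congr rfl fun i _ => congrFun hd i
    · rintro ⟨d, ⟨hd, hs⟩, rfl⟩
      refine ⟨hd, ?_, ?_⟩
      · rw [← hs, ← hsum]; rfl
      · ext i; exact congrArg d (hg i)
  rw [this, Set.ncard_image_of_injective _ hp.injective_comp_right]

def wcontent {n k : ℕ} (α : Fin n → Fin k) : Fin k → ℕ := fun i => Fintype.card {x // α x = i}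

lemma sum_content {n k : ℕ} (α : Fin n → Fin k) : ∑ i, wcontent α i = n := by
  unfold wcontent
  rw [← Fintype.card_sigma, Fintype.card_congr (Equiv.sigmaFiberEquiv α), Fintype.card_fin]

lemma exists_inj {m n k : ℕ} (β : Fin m → Fin k) (α : Fin n → Fin k) (h : wcontent β ≤ wcontent α) :
    ∃ π : Fin m → Fin n, Function.Injective π ∧ α ∘ π = β := by
  have : ∀ i, Nonempty ({x // β x = i} ↪ {x // α x = i}) := fun i =>
    Function.Embedding.nonempty_of_card_le (h i)
  have f : ∀ i, {x // β x = i} ↪ {x // α x = i} := fun i => (this i).some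
  have hα : ∀ x, α (f (β x) ⟨x, rfl⟩).1 = β x := fun x => (f (β x) ⟨x, rfl⟩).2
  refine ⟨fun x => (f (β x) ⟨x, rfl⟩).1, ?_, funext hα⟩
  intro x y hxy
  have h1 : β x = β y := by rw [← hα x, ← hα y]; exact congrArg α hxy
  have h2 : ∀ (i) (hx : β x = i) (hy : β y = i), (f i ⟨x, hx⟩).1 = (f i ⟨y, hy⟩).1 → x = y := by
    intro i hx hy hh
    have := (f i).injective (Subtype.ext hh)
    exact congrArg Subtype.val this
  have h3 : ∀ (i) (hy : β y = i), (f (β y) ⟨y, rfl⟩).1 = (f i ⟨y, hy⟩).1 := by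
    rintro i rfl; rfl
  exact h2 (β x) rfl h1.symm (hxy.trans (h3 _ _))

lemma exists_word {k n : ℕ} (c : Fin k → ℕ) (hc : ∑ i, c i = n) :
    ∃ α : Fin n → Fin k, wcontent α = c := by
  have hcard : Fintype.card (Σ i, Fin (c i)) = n := by simp [hc]
  let e : (Σ i, Fin (c i)) ≃ Fin n := Fintype.equivFinOfCardEq hcard
  refine ⟨fun x => (e.symm x).1, funext fun i => ?_⟩
  have e1 : {x // (e.symm x).1 = i} ≃ {y : Σ i, Fin (c i) // y.1 = i} :=
    e.symm.subtypeEquiv (fun _ => Iff.rfl)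
  unfold wcontent
  rw [Fintype.card_congr e1, Fintype.card_congr (Equiv.sigmaSubtype i), Fintype.card_fin]

lemma content_comp {n k : ℕ} (α : Fin n → Fin k) (g : Equiv.Perm (Fin k)) (τ : Equiv.Perm (Fin n)) :
    wcontent (⇑g ∘ α ∘ ⇑τ) = wcontent α ∘ ⇑g⁻¹ := by
  funext i
  refine Fintype.card_congr (Equiv.subtypeEquiv (p := fun x => (⇑g ∘ α ∘ ⇑τ) x = i)
    (q := fun x => α x = g⁻¹ i) τ fun x => ?_)
  simp [Equiv.eq_symm_apply]

end aux

/-- Quasipolynomial count of orbits for elementary model functors: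
`E n` is a set of words `[n] → [k]`, stable under postcomposition with `G ≤ Sym([k])`
and under precomposition with injections, and `G × Sym([n])` acts by
`(g,τ)·α = g ∘ α ∘ τ⁻¹`. -/
theorem orbit_count_elementary_model_functor
    (k : ℕ) (G : Subgroup (Equiv.Perm (Fin k)))
    (E : ∀ n : ℕ, Set (Fin n → Fin k))
    (hG : ∀ (n : ℕ), ∀ g ∈ G, ∀ α ∈ E n, (⇑g ∘ α) ∈ E n)
    (hres : ∀ (m n : ℕ) (π : Fin m → Fin n), Function.Injective π →
      ∀ α ∈ E n, (α ∘ π) ∈ E m) :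
    QuasiPolynomialCount (fun n =>
      Nat.card (Quot (fun (α β : {α : Fin n → Fin k // α ∈ E n}) =>
        ∃ g ∈ G, ∃ τ : Equiv.Perm (Fin n), ⇑g ∘ α.1 ∘ ⇑τ⁻¹ = β.1))) := by
  classical
  let D : Set (Fin k → ℕ) := {c | ∃ n, ∃ α ∈ E n, wcontent α = c}
  have hmem : ∀ {n} (α : Fin n → Fin k), wcontent α ∈ D → α ∈ E n := by
    rintro n α ⟨m, β, hβ, h⟩
    obtain ⟨π, hπ, rfl⟩ := exists_inj α β h.ge
    exact hres _ _ π hπ β hβ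
  have hD : IsLowerSet D := by
    rintro _ c hle ⟨m, β, hβ, rfl⟩
    obtain ⟨α, hα⟩ := exists_word c rfl
    rw [← hα] at hle ⊢
    obtain ⟨π, hπ, rfl⟩ := exists_inj α β hle
    exact ⟨_, _, hres _ _ π hπ β hβ, rfl⟩
  have hDG : ∀ g ∈ G, ∀ c ∈ D, c ∘ ⇑g⁻¹ ∈ D := by
    rintro g hg _ ⟨n, α, hα, rfl⟩
    exact ⟨n, _, hG n g hg α hα, content_comp α g 1⟩
  have hperm : ∀ {n} (α β : Fin n → Fin k), wcontent α = wcontent β →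
      ∃ τ : Equiv.Perm (Fin n), α ∘ ⇑τ⁻¹ = β := by
    intro n α β h
    obtain ⟨π, hπ, rfl⟩ := exists_inj β α h.ge
    refine ⟨(Equiv.ofBijective π (Finite.injective_iff_bijective.1 hπ))⁻¹, ?_⟩
    rw [inv_inv]; rfl
  let X : ℕ → Set (Fin k → ℕ) := fun n => {c | c ∈ D ∧ ∑ i, c i = n}
  have hXfin : ∀ n, (X n).Finite := fun n => by
    have := lev_finite (fun _ : Fin k => 1) (fun _ => one_pos) D n
    simpa [lev] using this
  let act : ∀ n, MulAction G (X n) := fun n =>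
    { smul := fun g c => ⟨c.1 ∘ ⇑(g.1)⁻¹, hDG _ g.2 _ c.2.1,
        (Equiv.sum_comp (g.1)⁻¹ c.1).trans c.2.2⟩
      one_smul := fun c => Subtype.ext (by funext i; rfl)
      mul_smul := fun g h c => Subtype.ext (by
        funext i
        show c.1 ((g * h).1⁻¹ i) = c.1 (h.1⁻¹ (g.1⁻¹ i))
        simp) }
  have hsmul : ∀ n (g : G) (c : X n), ((act n).toSMul.smul g c).1 = c.1 ∘ ⇑(g.1)⁻¹ :=
    fun _ _ _ => rfl
  have hcount : ∀ n, Nat.card (Quot (fun (α β : {α : Fin n → Fin k // α ∈ E n}) =>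
        ∃ g ∈ G, ∃ τ : Equiv.Perm (Fin n), ⇑g ∘ α.1 ∘ ⇑τ⁻¹ = β.1)) =
      Nat.card (Quotient (@MulAction.orbitRel G (X n) _ (act n))) := by
    intro n
    let _ := act n
    let F : {α : Fin n → Fin k // α ∈ E n} → X n := fun α =>
      ⟨wcontent α.1, ⟨n, α.1, α.2, rfl⟩, sum_content _⟩
    have hF : ∀ α β : {α : Fin n → Fin k // α ∈ E n},
        (∃ g ∈ G, ∃ τ : Equiv.Perm (Fin n), ⇑g ∘ α.1 ∘ ⇑τ⁻¹ = β.1) →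
        (Quotient.mk (MulAction.orbitRel G (X n)) (F α)) = Quotient.mk _ (F β) := by
      rintro α β ⟨g, hg, τ, h⟩
      refine (Quotient.sound (s := MulAction.orbitRel G (X n)) ⟨⟨g, hg⟩, Subtype.ext ?_⟩).symm
      show wcontent α.1 ∘ ⇑g⁻¹ = wcontent β.1
      rw [← h, content_comp]
    refine Nat.card_eq_of_bijective (Quot.lift (fun α => Quotient.mk _ (F α)) hF) ⟨?_, ?_⟩
    · rintro ⟨α⟩ ⟨β⟩ h
      obtain ⟨g, hg⟩ := Quotient.exact (s := MulAction.orbitRel G (X n)) h.symm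
      have h1 : wcontent α.1 ∘ ⇑(g.1)⁻¹ = wcontent β.1 := congrArg Subtype.val hg
      have h2 := content_comp α.1 g.1 1
      obtain ⟨τ, hτ⟩ := hperm _ _ (h2.trans h1)
      exact Quot.sound ⟨g.1, g.2, τ, hτ⟩
    · rintro ⟨c, hc, hs⟩
      obtain ⟨α, rfl⟩ := exists_word c hs
      exact ⟨Quot.mk _ ⟨α, hmem α hc⟩, rfl⟩
  have hburn : ∀ n, ((Nat.card (Quotient (@MulAction.orbitRel G (X n) _ (act n))) : ℕ) : ℚ) =
      (Fintype.card G : ℚ)⁻¹ * ∑ g : G, 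
        (({c | c ∈ D ∧ ∑ i, c i = n ∧ c ∘ ⇑(g.1)⁻¹ = c} : Set (Fin k → ℕ)).ncard : ℚ) := by
    intro n
    let _ := act n
    have : Fintype (X n) := (hXfin n).fintype
    have : Fintype (Quotient (MulAction.orbitRel G (X n))) := Fintype.ofFinite _
    have hb := MulAction.sum_card_fixedBy_eq_card_orbits_mul_card_group G (X n)
    have hfix : ∀ g : G, Fintype.card (MulAction.fixedBy (X n) g) =
        ({c | c ∈ D ∧ ∑ i, c i = n ∧ c ∘ ⇑(g.1)⁻¹ = c} : Set (Fin k → ℕ)).ncard := by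
      intro g
      rw [← Nat.card_eq_fintype_card, ← Nat.card_coe_set_eq]
      refine Nat.card_congr
        { toFun := fun c => ⟨c.1.1, c.1.2.1, c.1.2.2, congrArg Subtype.val c.2⟩
          invFun := fun c => ⟨⟨c.1, c.2.1, c.2.2.1⟩, Subtype.ext c.2.2.2⟩
          left_inv := fun _ => rfl
          right_inv := fun _ => rfl }
    simp only [hfix] at hb
    rw [Nat.card_eq_fintype_card]
    have hne : (Fintype.card G : ℚ) ≠ 0 := by exact_mod_cast Fintype.card_ne_zero
    rw [eq_inv_mul_iff_mul_eq₀ hne, mul_comm]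
    exact_mod_cast hb.symm
  refine EQP.toQuasi ?_
  simp only [hcount, hburn]
  exact (EQP.sum _ fun g _ => fix_EQP D hD g.1).smul _
end
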